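/- Let p be a prime with p ≡ 3 (mod 4). Then 4·R_b(p) > p, i.e. the number of quadratic residues of p in [1, (p−1)/2] exceeds p/4. -/

import Mathlib

/-!
Let `χ` be the quadratic character mod `p`, `S = ∑ y ≤ (p - 1) / 2, χ y` and `T = ∑ a < p, χ a * a`.
There are `((p - 1) / 2 + S) / 2` residues in `[1, (p - 1) / 2]`, and `(p - 1) / 2` is odd, so it is
enough to show `0 ≤ S`. The substitution `a ↦ 2 * a` gives `p * S = (χ 2 - 2) * T`, which reduces
this to `T ≤ 0`.

Expanding `χ` in additive characters and summing `∑ n, zⁿ / n = -log (1 - z)` turns the Gauss sum of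
`χ` times `∑ n, χ n / n` into `-(I * π / p) * T`. The Gauss sum is `I * √p`: its sign comes from the
Landsberg–Schaar reciprocity, obtained by comparing the growth of the Jacobi theta function at two
cusps exchanged by `τ ↦ -1 / τ`. Finally `0 ≤ ∑ n, χ n / n` by Dirichlet's hyperbola method, because
`∑ d ∣ n, χ d` is nonnegative for every `n`.
-/

section

open Complex Filter Topology

lemma tendsto_jacobiTheta₂_ofReal (a : ℝ) :
    Tendsto (fun τ ↦ jacobiTheta₂ a τ) (comap im atTop) (𝓝 1) := by
  have hterm (n : ℤ) : Tendsto (jacobiTheta₂_term n a) (comap im atTop)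
      (𝓝 (if n = 0 then 1 else 0)) := by
    split_ifs with hn
    · exact tendsto_const_nhds.congr fun τ ↦ by simp [hn, jacobiTheta₂_term]
    · rw [tendsto_zero_iff_norm_tendsto_zero]
      simp only [norm_jacobiTheta₂_term, ofReal_im, mul_zero, sub_zero]
      have hn' : (0 : ℝ) < Real.pi * n ^ 2 := by positivity
      refine Real.tendsto_exp_atBot.comp ?_
      simpa only [neg_mul, Function.comp_def] using
        tendsto_neg_atTop_atBot.comp (tendsto_comap.const_mul_atTop hn')
  have hbound : ∀ᶠ τ in comap im atTop, ∀ n : ℤ, ‖jacobiTheta₂_term n a τ‖ ≤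
      |(n : ℝ)| ^ 0 * Real.exp (-Real.pi * (1 * n ^ 2 - 2 * 0 * |n|)) := by
    filter_upwards [tendsto_comap.eventually_ge_atTop 1] with τ hτ n
    simpa only [pow_zero, one_mul, Int.cast_abs] using
      norm_jacobiTheta₂_term_le one_pos (by simp) hτ n
  simpa only [tsum_ite_eq, ← jacobiTheta₂.eq_def] using tendsto_tsum_of_dominated_convergence
    (by simpa using summable_pow_mul_jacobiTheta₂_term_bound 0 one_pos 0) hterm hbound

lemma jacobiTheta_functional_equation (τ : ℂ) :
    jacobiTheta τ = 1 / (-I * τ) ^ (1 / 2 : ℂ) * jacobiTheta (-1 / τ) := by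
  simpa [jacobiTheta_eq_jacobiTheta₂] using jacobiTheta₂_functional_equation 0 τ

lemma im_neg_one_div_pos {z : ℂ} (hz : 0 < z.im) : 0 < (-1 / z).im := by
  have hz₀ : z ≠ 0 := fun h ↦ by simp [h] at hz
  simpa [div_im, ← neg_div] using div_pos hz (normSq_pos.2 hz₀)

lemma hasSum_exp_sq_residueClass {M : ℕ} [NeZero M] {z : ℂ} (hz : 0 < z.im) (r : ℕ) :
    HasSum (fun m : ℤ ↦ cexp (Real.pi * I * (m * M + r) ^ 2 * (-1 / (M ^ 2 * z))))
      ((-I * z) ^ (1 / 2 : ℂ) * jacobiTheta₂ (-r / M : ℝ) z) := by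
  have hz₀ : z ≠ 0 := fun h ↦ by simp [h] at hz
  have hM : (M : ℂ) ≠ 0 := NeZero.ne _
  have hpow : (-I * z) ^ (1 / 2 : ℂ) ≠ 0 := by simp [cpow_eq_zero_iff, hz₀]
  have hterm (m : ℤ) : cexp (Real.pi * I * (m * M + r) ^ 2 * (-1 / (M ^ 2 * z))) =
      cexp (-Real.pi * I * (-r / M : ℝ) ^ 2 / z) *
        jacobiTheta₂_term m ((-r / M : ℝ) / z) (-1 / z) := by
    rw [jacobiTheta₂_term, ← exp_add]
    congr 1
    push_cast
    field_simp
    ring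
  rw [jacobiTheta₂_functional_equation, mul_assoc, one_div (_ ^ _), mul_inv_cancel_left₀ hpow]
  simpa only [hterm] using (hasSum_jacobiTheta₂_term _ (im_neg_one_div_pos hz)).mul_left _

lemma jacobiTheta_sub_one_div_eq_sum {q : ℝ} {M : ℕ} [NeZero M]
    (hq : Function.Periodic (fun n : ℤ ↦ cexp (Real.pi * I * n ^ 2 * q)) M)
    {z : ℂ} (hz : 0 < z.im) :
    jacobiTheta (q + -1 / (M ^ 2 * z)) = (-I * z) ^ (1 / 2 : ℂ) *
      ∑ r ∈ Finset.range M, cexp (Real.pi * I * r ^ 2 * q) * jacobiTheta₂ (-r / M : ℝ) z := by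
  have him : 0 < (q + -1 / (M ^ 2 * z) : ℂ).im := by
    rw [add_im, ofReal_im, zero_add]
    refine im_neg_one_div_pos ?_
    rw [← ofReal_natCast, ← ofReal_pow, im_ofReal_mul]
    have := NeZero.pos M
    positivity
  have hsum : HasSum (fun n : ℤ ↦ cexp (Real.pi * I * n ^ 2 * (q + -1 / (M ^ 2 * z))))
      (jacobiTheta (q + -1 / (M ^ 2 * z))) := by
    simpa [jacobiTheta₂_term, ← jacobiTheta_eq_jacobiTheta₂] using hasSum_jacobiTheta₂_term 0 him
  let e : Fin M × ℤ ≃ ℤ := (Equiv.prodComm _ _).trans (Int.divModEquiv M).symm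
  rw [Finset.mul_sum, ← Fin.sum_univ_eq_sum_range (fun r : ℕ ↦ (-I * z) ^ (1 / 2 : ℂ) *
    (cexp (Real.pi * I * r ^ 2 * q) * jacobiTheta₂ (-r / M : ℝ) z))]
  refine ((e.hasSum_iff.2 hsum).prod_fiberwise fun r ↦ ?_).unique (hasSum_fintype _)
  have hterm (m : ℤ) : cexp (Real.pi * I * r ^ 2 * q) *
      cexp (Real.pi * I * (m * M + r) ^ 2 * (-1 / (M ^ 2 * z))) =
        cexp (Real.pi * I * (e (r, m) : ℤ) ^ 2 * (q + -1 / (M ^ 2 * z))) := by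
    have hper : cexp (Real.pi * I * (m * M + r) ^ 2 * q) = cexp (Real.pi * I * r ^ 2 * q) := by
      simpa [add_comm] using hq.int_mul m r
    rw [← hper, ← exp_add]
    simp [e, mul_add]
  have hclass := hasSum_exp_sq_residueClass (M := M) hz r
  rw [mul_left_comm]
  simpa only [Function.comp_apply, ← hterm] using
    hclass.mul_left (cexp (Real.pi * I * r ^ 2 * q))

lemma tendsto_jacobiTheta_sub_one_div_div_cpow {q : ℝ} {M : ℕ} [NeZero M]
    (hq : Function.Periodic (fun n : ℤ ↦ cexp (Real.pi * I * n ^ 2 * q)) M) :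
    Tendsto (fun z ↦ jacobiTheta (q + -1 / (M ^ 2 * z)) / (-I * z) ^ (1 / 2 : ℂ))
      (comap im atTop) (𝓝 (∑ r ∈ Finset.range M, cexp (Real.pi * I * r ^ 2 * q))) := by
  have hlim : Tendsto (fun z ↦ ∑ r ∈ Finset.range M,
      cexp (Real.pi * I * r ^ 2 * q) * jacobiTheta₂ (-r / M : ℝ) z) (comap im atTop)
        (𝓝 (∑ r ∈ Finset.range M, cexp (Real.pi * I * r ^ 2 * q))) :=
    tendsto_finsetSum _ fun r _ ↦ by
      simpa using (tendsto_jacobiTheta₂_ofReal (-r / M)).const_mul (cexp (Real.pi * I * r ^ 2 * q))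
  refine hlim.congr' ?_
  filter_upwards [tendsto_comap.eventually_gt_atTop 0] with z hz
  have hz₀ : z ≠ 0 := fun h ↦ by simp [h] at hz
  rw [jacobiTheta_sub_one_div_eq_sum hq hz, mul_div_cancel_left₀]
  simp [cpow_eq_zero_iff, hz₀]

lemma ofReal_mul_cpow {r : ℝ} (hr : 0 < r) {z : ℂ} (hz : z ≠ 0) (s : ℂ) :
    (r * z) ^ s = (r : ℂ) ^ s * z ^ s := by
  have hr' : (r : ℂ) ≠ 0 := ofReal_ne_zero.2 hr.ne'
  rw [cpow_def_of_ne_zero (mul_ne_zero hr' hz), cpow_def_of_ne_zero hr', cpow_def_of_ne_zero hz,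
    log_ofReal_mul hr hz, ← ofReal_log hr.le, add_mul, exp_add]

lemma periodic_exp_sq_mul_div {a : ℤ} {b : ℕ} [NeZero b] (hab : Even (a * b)) :
    Function.Periodic (fun n : ℤ ↦ cexp (Real.pi * I * n ^ 2 * (a / b : ℝ))) b := by
  obtain ⟨k, hk⟩ := hab
  have hb : (b : ℂ) ≠ 0 := NeZero.ne _
  have hk' : (a * b : ℂ) = k + k := by exact_mod_cast hk
  refine fun n ↦ exp_eq_exp_iff_exists_int.2 ⟨n * a + k, ?_⟩
  push_cast
  field_simp
  linear_combination b * hk'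

lemma tendsto_ofReal_mul_I_sub (c : ℝ) :
    Tendsto (fun T : ℝ ↦ (T * I - c : ℂ)) atTop (comap im atTop) :=
  tendsto_comap_iff.2 (tendsto_id.congr fun T ↦ by simp)

lemma neg_one_div_div_add {a b z : ℂ} (ha : a ≠ 0) (hb : b ≠ 0) (hz : z ≠ 0)
    (hz' : z - (a * b)⁻¹ ≠ 0) :
    -1 / (a / b + -1 / (b ^ 2 * z)) = -b / a + -1 / (a ^ 2 * (z - (a * b)⁻¹)) := by
  have hden : a * b * z - 1 ≠ 0 := fun h ↦ hz' (by field_simp; linear_combination h)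
  rw [show a / b + -1 / (b ^ 2 * z) = (a * b * z - 1) / (b ^ 2 * z) by field_simp; ring,
    show a ^ 2 * (z - (a * b)⁻¹) = a * (a * b * z - 1) / b by field_simp]
  field_simp
  ring

lemma neg_I_mul_ofReal_mul_I_sub_inv {T : ℝ} (hT : T ≠ 0) (c : ℂ) :
    -I * (T * I - c⁻¹) = T * (1 + c⁻¹ * I * (T⁻¹ : ℝ)) := by
  have hT' : (T : ℂ) * (T⁻¹ : ℝ) = 1 := by exact_mod_cast mul_inv_cancel₀ hT
  linear_combination (-T : ℂ) * I_sq - c⁻¹ * I * hT'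

lemma neg_I_mul_div_add {a b : ℂ} (ha : a ≠ 0) (hb : b ≠ 0) {T : ℝ} (hT : T ≠ 0) :
    -I * (a / b + -1 / (b ^ 2 * (T * I))) = -I * (a / b) * (1 + (a * b)⁻¹ * I * (T⁻¹ : ℝ)) := by
  have hT' : (T : ℂ) ≠ 0 := ofReal_ne_zero.2 hT
  push_cast
  field_simp
  linear_combination I_sq

lemma one_add_mul_I_mul_ne_zero (x y : ℝ) : (1 + x * I * y : ℂ) ≠ 0 := fun h ↦ by
  simpa using congrArg re h

lemma tendsto_cpow_mul_one_add_div_cpow {w : ℂ} (hw : w ∈ slitPlane) (c s : ℂ) :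
    Tendsto (fun T : ℝ ↦ (w * (1 + c * I * (T⁻¹ : ℝ))) ^ s / (1 + c * I * (T⁻¹ : ℝ)) ^ s) atTop
      (𝓝 (w ^ s)) := by
  have hinv : Tendsto (fun T : ℝ ↦ ((T⁻¹ : ℝ) : ℂ)) atTop (𝓝 0) :=
    (continuous_ofReal.tendsto' 0 0 ofReal_zero).comp tendsto_inv_atTop_zero
  have hone : Tendsto (fun T : ℝ ↦ 1 + c * I * (T⁻¹ : ℝ)) atTop (𝓝 1) := by
    simpa only [mul_zero, add_zero] using (hinv.const_mul (c * I)).const_add 1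
  have hmul : Tendsto (fun T : ℝ ↦ w * (1 + c * I * (T⁻¹ : ℝ))) atTop (𝓝 w) := by
    simpa only [mul_one] using hone.const_mul w
  simpa only [one_cpow, div_one, Pi.div_def] using
    (hmul.cpow tendsto_const_nhds hw).div (hone.cpow tendsto_const_nhds one_mem_slitPlane)
      (by simp)

/- The cusps `a / b` and `-b / a` of `jacobiTheta` are exchanged by `τ ↦ -1 / τ`; the relation
compares the leading coefficients of `jacobiTheta` at the two cusps. -/
theorem cpow_mul_sum_range_exp_sq {a b : ℕ} [NeZero a] [NeZero b] (hab : Even (a * b)) :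
    (-I * (a / b)) ^ (1 / 2 : ℂ) * ∑ r ∈ Finset.range b, cexp (Real.pi * I * r ^ 2 * (a / b)) =
      ∑ r ∈ Finset.range a, cexp (Real.pi * I * r ^ 2 * (-b / a)) := by
  have ha : (a : ℂ) ≠ 0 := NeZero.ne _
  have hb : (b : ℂ) ≠ 0 := NeZero.ne _
  have hleft := (tendsto_jacobiTheta_sub_one_div_div_cpow
    (periodic_exp_sq_mul_div (a := a) (b := b) (by exact_mod_cast hab))).comp
      (tendsto_ofReal_mul_I_sub 0)
  have hright := (tendsto_jacobiTheta_sub_one_div_div_cpow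
    (periodic_exp_sq_mul_div (a := -b) (b := a)
      (by rw [neg_mul, even_neg, mul_comm]; exact_mod_cast hab))).comp
      (tendsto_ofReal_mul_I_sub (a * b)⁻¹)
  push_cast at hleft hright
  simp only [Function.comp_def, sub_zero] at hleft hright
  have hslit : -I * (a / b) ∈ slitPlane := .inr <| by
    rw [← ofReal_natCast, ← ofReal_natCast, ← ofReal_div]
    simp [NeZero.ne a, NeZero.ne b]
  have hfactor := tendsto_cpow_mul_one_add_div_cpow hslit (a * b)⁻¹ (1 / 2)
  refine tendsto_nhds_unique_of_eventuallyEq (hfactor.mul hleft) hright ?_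
  filter_upwards [eventually_gt_atTop 0] with T hT
  have hT₀ : (T : ℂ) ≠ 0 := ofReal_ne_zero.2 hT.ne'
  have hu : (1 + (a * b : ℂ)⁻¹ * I * (T⁻¹ : ℝ)) ≠ 0 := by
    simpa using one_add_mul_I_mul_ne_zero (a * b)⁻¹ T⁻¹
  have hz := neg_I_mul_ofReal_mul_I_sub_inv hT.ne' (a * b)
  have hz₀ : T * I - (a * b : ℂ)⁻¹ ≠ 0 := fun h ↦ by
    rw [h, mul_zero] at hz
    exact mul_ne_zero hT₀ hu hz.symm
  have hpow : (-I * (a / b) * (1 + (a * b : ℂ)⁻¹ * I * (T⁻¹ : ℝ))) ^ (1 / 2 : ℂ) ≠ 0 := by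
    simpa [cpow_eq_zero_iff, ha, hb] using hu
  rw [jacobiTheta_functional_equation (a / b + _), neg_one_div_div_add ha hb (by simp [hT₀]) hz₀,
    hz, neg_I_mul_div_add ha hb hT.ne', ofReal_mul_cpow hT hu,
    show -I * (T * I) = T by linear_combination (-T : ℂ) * I_sq, div_mul_div_comm, ← mul_assoc,
    mul_one_div_cancel hpow, one_mul, mul_comm ((T : ℂ) ^ _)]

lemma cpow_one_half_neg_I_mul_two_div (N : ℕ) [NeZero N] :
    (-I * (2 / N)) ^ (1 / 2 : ℂ) = (1 - I) / (√N : ℝ) := by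
  have hN : (0 : ℝ) < √N := Real.sqrt_pos.2 (Nat.cast_pos.2 (NeZero.pos N))
  have hsq : -I * (2 / N) = ((1 - I) / (√N : ℝ)) ^ 2 := by
    rw [div_pow, ← ofReal_pow, Real.sq_sqrt (Nat.cast_nonneg N), sub_sq, I_sq]
    push_cast
    ring
  rw [hsq, one_div, sq_cpow_two_inv]
  simpa [div_ofReal_re] using hN

lemma sum_range_natCast_zmod {M : Type*} [AddCommMonoid M] (N : ℕ) [NeZero N] (f : ZMod N → M) :
    ∑ r ∈ Finset.range N, f r = ∑ a, f a :=
  Finset.sum_nbij' (fun r ↦ r) ZMod.val (by simp) (by simp [ZMod.val_lt])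
    (fun r hr ↦ ZMod.val_cast_of_lt (Finset.mem_range.1 hr)) (by simp) (by simp)

theorem sum_stdAddChar_sq (N : ℕ) [NeZero N] :
    ∑ a : ZMod N, ZMod.stdAddChar (a ^ 2) = (√N : ℝ) * (1 + (-I) ^ N) / (1 - I) := by
  have hN : ((√N : ℝ) : ℂ) ≠ 0 :=
    ofReal_ne_zero.2 (Real.sqrt_pos.2 (Nat.cast_pos.2 (NeZero.pos N))).ne'
  have hI : 1 - I ≠ 0 := fun h ↦ by simpa using congrArg re h
  have hterm (r : ℕ) : ZMod.stdAddChar ((r : ZMod N) ^ 2) =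
      cexp (Real.pi * I * r ^ 2 * ((2 : ℕ) / N)) := by
    have h := ZMod.stdAddChar_coe (N := N) (r ^ 2)
    push_cast at h ⊢
    rw [h]
    congr 1
    ring
  have hexp : cexp (Real.pi * I * 1 ^ 2 * (-N / (2 : ℕ))) = (-I) ^ N := by
    rw [← exp_neg_pi_div_two_mul_I, ← exp_nat_mul]
    congr 1
    push_cast
    ring
  have h := cpow_mul_sum_range_exp_sq (a := 2) (b := N) (even_two_mul N)
  simp only [Finset.sum_range_succ, Finset.range_zero, Finset.sum_empty, ← hterm] at h
  rw [sum_range_natCast_zmod N fun a ↦ ZMod.stdAddChar (a ^ 2)] at h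
  rw [Nat.cast_zero, Nat.cast_one, hexp, Nat.cast_ofNat, cpow_one_half_neg_I_mul_two_div,
    div_mul_eq_mul_div, div_eq_iff hN, zero_pow two_ne_zero, mul_zero, zero_mul, exp_zero,
    zero_add] at h
  rw [eq_div_iff hI, mul_comm, h, mul_comm]

lemma sum_stdAddChar_sq_of_mod_four_eq_three {N : ℕ} [NeZero N] (hN : N % 4 = 3) :
    ∑ a : ZMod N, ZMod.stdAddChar (a ^ 2) = I * (√N : ℝ) := by
  have hI : 1 - I ≠ 0 := fun h ↦ by simpa using congrArg re h
  have hpow : (-I) ^ N = I := by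
    rw [← Nat.div_add_mod N 4, hN, pow_add, pow_mul, Even.neg_pow (by decide), I_pow_four, one_pow]
    linear_combination (-I) * I_sq
  rw [sum_stdAddChar_sq, hpow, div_eq_iff hI]
  linear_combination (√N : ℝ) * I_sq

theorem gaussSum_quadraticChar_eq_sum_sq {F R : Type*} [Field F] [Fintype F] [DecidableEq F]
    [CommRing R] [IsDomain R] (hF : ringChar F ≠ 2) {ψ : AddChar F R} (hψ : ψ ≠ 1) :
    gaussSum ((quadraticChar F).ringHomComp (Int.castRingHom R)) ψ = ∑ x, ψ (x ^ 2) := by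
  have hcard (a : F) : (∑ x : F with x ^ 2 = a, ψ (x ^ 2)) = (quadraticChar F a + 1 : ℤ) * ψ a := by
    rw [← quadraticChar_card_sqrts hF a, Finset.sum_congr rfl fun x hx ↦ by
      rw [(Finset.mem_filter.1 hx).2], Finset.sum_const, nsmul_eq_mul, Int.cast_natCast]
    congr 2
    simp
  have hψ₀ : ∑ a, ψ a = 0 := AddChar.sum_eq_zero_of_ne_one hψ
  simp [gaussSum, ← Finset.sum_fiberwise Finset.univ (· ^ 2) fun x ↦ ψ (x ^ 2), hcard, add_mul,
    Finset.sum_add_distrib, hψ₀]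

theorem gaussSum_quadraticChar_stdAddChar {p : ℕ} [Fact p.Prime] (hp : p % 4 = 3) :
    gaussSum ((quadraticChar (ZMod p)).ringHomComp (Int.castRingHom ℂ)) ZMod.stdAddChar =
      I * (√p : ℝ) := by
  have hchar : ringChar (ZMod p) ≠ 2 := by rw [ZMod.ringChar_zmod_n]; lia
  have hψ : (ZMod.stdAddChar : AddChar (ZMod p) ℂ) ≠ 1 := by
    simpa using ZMod.isPrimitive_stdAddChar p one_ne_zero
  rw [gaussSum_quadraticChar_eq_sum_sq hchar hψ, sum_stdAddChar_sq_of_mod_four_eq_three hp]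

lemma norm_geom_sum_le {z : ℂ} (hz : ‖z‖ ≤ 1) (hz₁ : z ≠ 1) (n : ℕ) :
    ‖∑ i ∈ Finset.range n, z ^ i‖ ≤ 2 / ‖z - 1‖ := by
  rw [geom_sum_eq hz₁, norm_div]
  gcongr
  calc ‖z ^ n - 1‖ ≤ ‖z‖ ^ n + ‖(1 : ℂ)‖ := (norm_sub_le _ _).trans_eq (by rw [norm_pow])
    _ ≤ 2 := by rw [norm_one]; linarith [pow_le_one₀ (n := n) (norm_nonneg z) hz]

lemma cauchySeq_sum_range_pow_div {z : ℂ} (hz : ‖z‖ ≤ 1) (hz₁ : z ≠ 1) :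
    CauchySeq fun N ↦ ∑ n ∈ Finset.range N, z ^ n / n := by
  have hbound (N : ℕ) : ‖∑ i ∈ Finset.range N, z ^ (i + 1)‖ ≤ 2 / ‖z - 1‖ := by
    rw [Finset.sum_congr rfl fun i _ ↦ pow_succ z i, ← Finset.sum_mul, norm_mul]
    exact (mul_le_of_le_one_right (norm_nonneg _) hz).trans (norm_geom_sum_le hz hz₁ N)
  have hanti : Antitone fun n : ℕ ↦ 1 / ((n : ℝ) + 1) := fun m n h ↦
    Nat.one_div_le_one_div h
  refine (cauchySeq_shift 1).1 ?_
  simpa [Finset.sum_range_succ', div_eq_inv_mul] using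
    hanti.cauchySeq_series_mul_of_tendsto_zero_of_bounded
      tendsto_one_div_add_atTop_nhds_zero_nat hbound

lemma one_sub_mem_slitPlane {z : ℂ} (hz : ‖z‖ ≤ 1) (hz₁ : z ≠ 1) : 1 - z ∈ slitPlane := by
  refine .inl (sub_pos.2 <| lt_of_le_of_ne ((re_le_norm z).trans hz) fun hre ↦ hz₁ ?_)
  have hnorm : |z.re| = ‖z‖ :=
    le_antisymm (abs_re_le_norm z) (by simpa only [hre, one_re, abs_one] using hz)
  exact Complex.ext hre (abs_re_eq_norm.1 hnorm)

theorem tendsto_sum_range_pow_div {z : ℂ} (hz : ‖z‖ ≤ 1) (hz₁ : z ≠ 1) :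
    Tendsto (fun N ↦ ∑ n ∈ Finset.range N, z ^ n / n) atTop (𝓝 (-log (1 - z))) := by
  obtain ⟨l, hl⟩ := cauchySeq_tendsto_of_complete (cauchySeq_sum_range_pow_div hz hz₁)
  have habel := tendsto_map'_iff.1 (tendsto_tsum_powerSeries_nhdsWithin_lt hl)
  have hlog : Tendsto (fun r : ℝ ↦ -log (1 - z * r)) (𝓝[<] 1) (𝓝 (-log (1 - z))) := by
    have hcont : ContinuousAt (fun r : ℝ ↦ -log (1 - z * r)) 1 := by
      refine (ContinuousAt.clog (by fun_prop) ?_).neg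
      simpa using one_sub_mem_slitPlane hz hz₁
    simpa using hcont.tendsto.mono_left nhdsWithin_le_nhds
  suffices h : l = -log (1 - z) from h ▸ hl
  refine tendsto_nhds_unique (habel.congr' ?_) hlog
  filter_upwards [Ioo_mem_nhdsLT zero_lt_one] with r hr
  have hzr : ‖z * r‖ < 1 := by
    rw [norm_mul, norm_real, Real.norm_of_nonneg hr.1.le]
    exact mul_lt_one_of_nonneg_of_lt_one_right hz hr.1.le hr.2
  rw [← (hasSum_taylorSeries_neg_log hzr).tsum_eq]
  exact tsum_congr fun n ↦ by rw [mul_pow, mul_div_right_comm]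

lemma arg_one_sub_exp {x : ℝ} (hx : x ∈ Set.Ioo 0 1) :
    (1 - cexp (2 * Real.pi * I * x)).arg = Real.pi * (x - 1 / 2) := by
  have hsin : 0 < Real.sin (Real.pi * x) :=
    Real.sin_pos_of_pos_of_lt_pi (mul_pos Real.pi_pos hx.1)
      (mul_lt_of_lt_one_right Real.pi_pos hx.2)
  have hpolar : 1 - cexp (2 * Real.pi * I * x) = (2 * Real.sin (Real.pi * x) : ℝ) *
      cexp ((Real.pi * (x - 1 / 2) : ℝ) * I) := by
    have hquarter : cexp ((Real.pi * (x - 1 / 2) : ℝ) * I) = cexp (Real.pi * x * I) * -I := by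
      rw [← exp_neg_pi_div_two_mul_I, ← exp_add]
      congr 1
      push_cast
      ring
    have hdouble : cexp (2 * Real.pi * I * x) = cexp (Real.pi * x * I) ^ 2 := by
      rw [← exp_nat_mul]
      congr 1
      push_cast
      ring
    have hinv : cexp (-(Real.pi * x) * I) * cexp (Real.pi * x * I) = 1 := by
      rw [← exp_add, neg_mul, neg_add_cancel, exp_zero]
    rw [hquarter, hdouble, ofReal_mul, ofReal_sin, Complex.sin]
    push_cast
    linear_combination (1 - cexp (Real.pi * x * I) ^ 2) * I_sq + I ^ 2 * hinv
  rw [hpolar, exp_mul_I]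
  refine arg_mul_cos_add_sin_mul_I (by positivity) ⟨?_, ?_⟩ <;> nlinarith [Real.pi_pos, hx.1, hx.2]

lemma isPrimitive_of_ne_one_of_prime {R : Type*} [CommMonoidWithZero R] {p : ℕ}
    [hp : Fact p.Prime] {χ : DirichletCharacter R p} (hχ : χ ≠ 1) : χ.IsPrimitive :=
  (hp.out.eq_one_or_self_of_dvd _ χ.conductor_dvd_level).resolve_left
    (mt χ.eq_one_iff_conductor_eq_one.2 hχ)

theorem tendsto_gaussSum_mul_sum_range_div {N : ℕ} [NeZero N] (hN : N ≠ 1)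
    {χ : DirichletCharacter ℂ N} (hχ : χ.IsPrimitive) :
    Tendsto (fun M ↦ gaussSum χ ZMod.stdAddChar * ∑ n ∈ Finset.range M, χ⁻¹ n / n) atTop
      (𝓝 (-∑ a, χ a * log (1 - ZMod.stdAddChar a))) := by
  have hterm (n : ℕ) : gaussSum χ ZMod.stdAddChar * (χ⁻¹ n / n) =
      ∑ a, χ a * (ZMod.stdAddChar a ^ n / n) := by
    rw [← mul_div_assoc, mul_comm (gaussSum _ _), ← gaussSum_mulShift_of_isPrimitive _ hχ, gaussSum,
      Finset.sum_div]
    refine Finset.sum_congr rfl fun a _ ↦ ?_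
    rw [AddChar.mulShift_apply, ← nsmul_eq_mul, AddChar.map_nsmul_eq_pow, mul_div_assoc]
  have hsum (M : ℕ) : ∑ a, χ a * ∑ n ∈ Finset.range M, ZMod.stdAddChar a ^ n / (n : ℂ) =
      gaussSum χ ZMod.stdAddChar * ∑ n ∈ Finset.range M, χ⁻¹ n / n := by
    simp only [Finset.mul_sum, hterm]
    exact Finset.sum_comm
  simp only [← hsum, ← Finset.sum_neg_distrib, ← mul_neg]
  refine tendsto_finsetSum _ fun a _ ↦ ?_
  rcases eq_or_ne a 0 with rfl | ha
  · simp [χ.map_zero' hN]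
  · exact (tendsto_sum_range_pow_div (AddChar.norm_apply _ a).le fun h ↦ ha <|
      ZMod.injective_stdAddChar (h.trans (AddChar.map_zero_eq_one _).symm)).const_mul _

lemma arg_one_sub_stdAddChar {N : ℕ} [NeZero N] {a : ZMod N} (ha : a ≠ 0) :
    (1 - ZMod.stdAddChar a).arg = Real.pi * (a.val / N - 1 / 2) := by
  have hN : (0 : ℝ) < N := Nat.cast_pos.2 (NeZero.pos N)
  have hval : (a.val / N : ℝ) ∈ Set.Ioo 0 1 :=
    ⟨div_pos (Nat.cast_pos.2 (ZMod.val_pos.2 ha)) hN,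
      (div_lt_one hN).2 (Nat.cast_lt.2 (ZMod.val_lt a))⟩
  have hexp : ZMod.stdAddChar a = cexp (2 * Real.pi * I * (a.val / N : ℝ)) := by
    have h := ZMod.stdAddChar_coe (N := N) a.val
    push_cast [ZMod.natCast_zmod_val] at h ⊢
    rw [h, mul_div_assoc]
  rw [hexp, arg_one_sub_exp hval]

lemma im_sum_mul_log_one_sub_stdAddChar {N : ℕ} [NeZero N] {f : ZMod N → ℝ} (hf₀ : f 0 = 0)
    (hf : ∑ a, f a = 0) :
    (∑ a, f a * log (1 - ZMod.stdAddChar a)).im = Real.pi / N * ∑ a, f a * a.val := by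
  have hN : (N : ℝ) ≠ 0 := NeZero.ne _
  have hterm (a : ZMod N) : (f a * log (1 - ZMod.stdAddChar a)).im =
      Real.pi / N * (f a * a.val) - Real.pi / 2 * f a := by
    rcases eq_or_ne a 0 with rfl | ha
    · simp [hf₀]
    · rw [im_ofReal_mul, log_im, arg_one_sub_stdAddChar ha]
      field_simp
  rw [im_sum, Finset.sum_congr rfl fun a _ ↦ hterm a, Finset.sum_sub_distrib, ← Finset.mul_sum,
    ← Finset.mul_sum, hf, mul_zero, sub_zero]

lemma quadraticChar_ringHomComp_ne_one {F R : Type*} [Field F] [Fintype F] [DecidableEq F]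
    [CommRing R] [CharZero R] (hF : ringChar F ≠ 2) :
    (quadraticChar F).ringHomComp (Int.castRingHom R) ≠ 1 :=
  (MulChar.ringHomComp_ne_one_iff Int.cast_injective).2 (quadraticChar_ne_one hF)

theorem tendsto_sum_range_quadraticChar_div {p : ℕ} [Fact p.Prime] (hp : p % 4 = 3) :
    Tendsto (fun M ↦ √p * ∑ n ∈ Finset.range M, (quadraticChar (ZMod p) n / n : ℝ)) atTop
      (𝓝 (-(Real.pi / p * ∑ a : ZMod p, quadraticChar (ZMod p) a * (a.val : ℝ)))) := by
  have hchar : ringChar (ZMod p) ≠ 2 := by rw [ZMod.ringChar_zmod_n]; lia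
  set χ := (quadraticChar (ZMod p)).ringHomComp (Int.castRingHom ℂ)
  have hχ₁ : χ ≠ 1 := quadraticChar_ringHomComp_ne_one hchar
  have hχinv : χ⁻¹ = χ := ((quadraticChar_isQuadratic _).comp _).inv
  have hχ (a : ZMod p) : χ a = ((quadraticChar (ZMod p) a : ℝ) : ℂ) := by simp [χ]
  have hlim := (continuous_im.tendsto _).comp <| tendsto_gaussSum_mul_sum_range_div
    (Fact.out : p.Prime).ne_one (isPrimitive_of_ne_one_of_prime hχ₁)
  have hpartial (M : ℕ) : (gaussSum χ ZMod.stdAddChar * ∑ n ∈ Finset.range M, χ⁻¹ n / n).im =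
      √p * ∑ n ∈ Finset.range M, (quadraticChar (ZMod p) n / n : ℝ) := by
    rw [gaussSum_quadraticChar_stdAddChar hp, hχinv, mul_assoc, I_mul_im, re_ofReal_mul]
    simp only [hχ]
    norm_cast
  have hsum : ∑ a : ZMod p, (quadraticChar (ZMod p) a : ℝ) = 0 :=
    mod_cast MulChar.sum_eq_zero_of_ne_one (quadraticChar_ne_one hchar)
  have hvalue := im_sum_mul_log_one_sub_stdAddChar (by simp) hsum
  simp only [← hχ] at hvalue
  simpa only [Function.comp_def, hpartial, neg_im, hvalue] using hlim

lemma abs_sum_range_mul_le_of_antitone {u z : ℕ → ℝ} {C : ℝ} (hu : Antitone u)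
    (hu₀ : ∀ n, 0 ≤ u n) (hz : ∀ n, |∑ i ∈ Finset.range n, z i| ≤ C) (n : ℕ) :
    |∑ i ∈ Finset.range n, u i * z i| ≤ u 0 * C := by
  have hC : 0 ≤ C := (abs_nonneg _).trans (hz 0)
  rcases n with _ | n
  · simpa using mul_nonneg (hu₀ 0) hC
  have hstep (i : ℕ) : 0 ≤ u i - u (i + 1) := sub_nonneg.2 (hu i.le_succ)
  have hlast : |u n * ∑ i ∈ Finset.range (n + 1), z i| ≤ u n * C := by
    rw [abs_mul, abs_of_nonneg (hu₀ n)]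
    exact mul_le_mul_of_nonneg_left (hz _) (hu₀ n)
  have hdiff : |∑ i ∈ Finset.range n, (u (i + 1) - u i) * ∑ j ∈ Finset.range (i + 1), z j| ≤
      (u 0 - u n) * C := by
    rw [← Finset.sum_range_sub', Finset.sum_mul]
    refine (Finset.abs_sum_le_sum_abs _ _).trans (Finset.sum_le_sum fun i _ ↦ ?_)
    rw [abs_mul, abs_sub_comm, abs_of_nonneg (hstep i)]
    exact mul_le_mul_of_nonneg_left (hz _) (hstep i)
  calc |∑ i ∈ Finset.range (n + 1), u i * z i|
      = |u n * ∑ i ∈ Finset.range (n + 1), z i -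
          ∑ i ∈ Finset.range n, (u (i + 1) - u i) * ∑ j ∈ Finset.range (i + 1), z j| :=
        congrArg _ (Finset.sum_range_by_parts u z (n + 1))
    _ ≤ u n * C + (u 0 - u n) * C := (abs_sub _ _).trans (add_le_add hlast hdiff)
    _ = u 0 * C := by ring

lemma mul_natCast_div_le {x : ℝ} (hx : |x| ≤ 1) (n d : ℕ) :
    x * ((n / d : ℕ) : ℝ) ≤ n * (x / d) + 1 := by
  have hle : ((n / d : ℕ) : ℝ) ≤ n / d := Nat.cast_div_le
  have hlt : (n / d : ℝ) < (n / d : ℕ) + 1 := by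
    rw [← Nat.floor_div_eq_div (K := ℝ)]
    exact Nat.lt_floor_add_one _
  rw [mul_div_left_comm]
  nlinarith [abs_le.1 hx]

lemma abs_sum_Ioc_mul_natCast_div_le {f : ℕ → ℝ} {C : ℝ}
    (hC : ∀ a n, |∑ i ∈ Finset.range n, f (a + i)| ≤ C) (m n : ℕ) :
    |∑ d ∈ Finset.Ioc m n, f d * ((n / d : ℕ) : ℝ)| ≤ (n / (m + 1) : ℕ) * C := by
  have hanti : Antitone fun i : ℕ ↦ ((n / (m + 1 + i) : ℕ) : ℝ) := fun i j hij ↦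
    Nat.cast_le.2 (Nat.div_le_div_left (Nat.add_le_add_left hij _) (by positivity))
  rw [← Finset.Ico_add_one_add_one_eq_Ioc, Finset.sum_Ico_eq_sum_range]
  simp only [mul_comm (f _)]
  exact abs_sum_range_mul_le_of_antitone hanti (fun _ ↦ Nat.cast_nonneg _) (hC (m + 1)) _

/- Dirichlet's hyperbola method: in `0 ≤ ∑ n ≤ y², (f * ζ) n = ∑ d ≤ y², f d * ⌊y² / d⌋`, removing
the floors for `d ≤ y` costs at most `y`, and the terms with `d > y` contribute at most `y * C`. -/
theorem neg_div_le_sum_Ioc_div {f : ArithmeticFunction ℝ} {C : ℝ} (hf : ∀ d, |f d| ≤ 1)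
    (hC : ∀ a n, |∑ i ∈ Finset.range n, f (a + i)| ≤ C)
    (hpos : ∀ n, 0 ≤ (f * (ArithmeticFunction.zeta : ArithmeticFunction ℝ)) n) (y : ℕ) :
    -(1 + C) / y ≤ ∑ d ∈ Finset.Ioc 0 y, f d / d := by
  rcases y.eq_zero_or_pos with rfl | hy
  · simp
  have hy' : (0 : ℝ) < y := Nat.cast_pos.2 hy
  have hC₀ : 0 ≤ C := (abs_nonneg _).trans (hC 0 0)
  have hsplit : 0 ≤ ∑ d ∈ Finset.Ioc 0 y, f d * ↑(y ^ 2 / d) +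
      ∑ d ∈ Finset.Ioc y (y ^ 2), f d * ↑(y ^ 2 / d) := by
    rw [Finset.sum_Ioc_consecutive _ y.zero_le (Nat.le_self_pow two_ne_zero y),
      ← ArithmeticFunction.sum_Ioc_mul_zeta_eq_sum]
    exact Finset.sum_nonneg fun n _ ↦ hpos n
  have hhead : ∑ d ∈ Finset.Ioc 0 y, f d * ↑(y ^ 2 / d) ≤
      y ^ 2 * ∑ d ∈ Finset.Ioc 0 y, f d / d + y := by
    refine (Finset.sum_le_sum fun d _ ↦ mul_natCast_div_le (hf d) (y ^ 2) d).trans_eq ?_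
    simp [Finset.sum_add_distrib, Finset.mul_sum]
  have htail : ∑ d ∈ Finset.Ioc y (y ^ 2), f d * ↑(y ^ 2 / d) ≤ y * C := by
    refine (le_abs_self _).trans ((abs_sum_Ioc_mul_natCast_div_le hC y (y ^ 2)).trans ?_)
    exact mul_le_mul_of_nonneg_right
      (Nat.cast_le.2 (Nat.div_le_of_le_mul (by nlinarith))) hC₀
  rw [div_le_iff₀ hy']
  nlinarith

lemma abs_sum_range_add_le_of_sum_eq_zero {N : ℕ} [NeZero N] {f : ZMod N → ℝ}
    (hf : ∀ a, |f a| ≤ 1) (hsum : ∑ a, f a = 0) (a : ZMod N) (n : ℕ) :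
    |∑ i ∈ Finset.range n, f (a + i)| ≤ N := by
  induction n using Nat.strong_induction_on with
  | _ n ih =>
    rcases lt_or_ge n N with hn | hn
    · calc |∑ i ∈ Finset.range n, f (a + i)|
          ≤ ∑ i ∈ Finset.range n, |f (a + i)| := Finset.abs_sum_le_sum_abs _ _
        _ ≤ n := by simpa using Finset.sum_le_sum fun i (_ : i ∈ Finset.range n) ↦ hf (a + i)
        _ ≤ N := mod_cast hn.le
    · obtain ⟨k, rfl⟩ := Nat.exists_eq_add_of_le hn
      have hperiod : ∑ i ∈ Finset.range N, f (a + i) = 0 :=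
        (sum_range_natCast_zmod N fun b ↦ f (a + b)).trans
          ((Equiv.sum_comp (Equiv.addLeft a) f).trans hsum)
      rw [Finset.sum_range_add, hperiod, zero_add]
      simpa using ih k (Nat.lt_add_of_pos_left (NeZero.pos N))

lemma sum_divisors_quadraticChar_nonneg (p : ℕ) [Fact p.Prime] (n : ℕ) :
    0 ≤ ∑ d ∈ n.divisors, quadraticChar (ZMod p) d := by
  have h := DirichletCharacter.zetaMul_nonneg
    ((quadraticChar_isQuadratic (ZMod p)).comp (Int.castRingHom ℂ)).sq_eq_one n
  rw [DirichletCharacter.zetaMul, ArithmeticFunction.coe_zeta_mul_apply,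
    Finset.sum_congr rfl fun d hd ↦ (DirichletCharacter.apply_eq_toArithmeticFunction_apply _
      (Nat.pos_of_mem_divisors hd).ne').symm] at h
  simp only [MulChar.ringHomComp_apply, eq_intCast] at h
  rw [← Int.cast_sum, ← ofReal_intCast, zero_le_real] at h
  exact mod_cast h

lemma neg_div_le_sum_range_quadraticChar_div {p : ℕ} [Fact p.Prime] (hp : p ≠ 2) (y : ℕ) :
    -(1 + p) / y ≤ ∑ n ∈ Finset.range (y + 1), (quadraticChar (ZMod p) n / n : ℝ) := by
  have hsum : ∑ a : ZMod p, (quadraticChar (ZMod p) a : ℝ) = 0 :=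
    mod_cast MulChar.sum_eq_zero_of_ne_one
      (quadraticChar_ne_one ((ZMod.ringChar_zmod_n p).trans_ne hp))
  have habs (a : ZMod p) : |(quadraticChar (ZMod p) a : ℝ)| ≤ 1 := by
    rcases quadraticChar_isQuadratic (ZMod p) a with h | h | h <;> simp [h]
  let f : ArithmeticFunction ℝ := ⟨fun n ↦ quadraticChar (ZMod p) n, by simp⟩
  have hf (n : ℕ) : f n = quadraticChar (ZMod p) n := rfl
  have hpos (n : ℕ) : 0 ≤ (f * (ArithmeticFunction.zeta : ArithmeticFunction ℝ)) n := by
    rw [ArithmeticFunction.coe_mul_zeta_apply]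
    simp only [hf]
    exact mod_cast sum_divisors_quadraticChar_nonneg p n
  have hwindow (a n : ℕ) : |∑ i ∈ Finset.range n, f (a + i)| ≤ p := by
    simpa only [hf, Nat.cast_add] using abs_sum_range_add_le_of_sum_eq_zero habs hsum a n
  refine (neg_div_le_sum_Ioc_div (fun d ↦ habs d) hwindow hpos y).trans_eq ?_
  rw [Finset.range_eq_Ico, Finset.sum_eq_sum_Ico_succ_bot y.succ_pos,
    ← Finset.Ico_add_one_add_one_eq_Ioc]
  simp [hf]

theorem sum_quadraticChar_mul_val_nonpos {p : ℕ} [Fact p.Prime] (hp : p % 4 = 3) :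
    ∑ a : ZMod p, quadraticChar (ZMod p) a * (a.val : ℤ) ≤ 0 := by
  have hp₀ : (0 : ℝ) < p := Nat.cast_pos.2 (Nat.Prime.pos Fact.out)
  have hlower := (tendsto_const_div_atTop_nhds_zero_nat (-(1 + p) : ℝ)).const_mul √p
  have hlimit := (tendsto_sum_range_quadraticChar_div hp).comp (tendsto_add_atTop_nat 1)
  have hnonneg := le_of_tendsto_of_tendsto' hlower hlimit fun y ↦ mul_le_mul_of_nonneg_left
    (neg_div_le_sum_range_quadraticChar_div (by lia) y) (Real.sqrt_nonneg p)
  rw [mul_zero, neg_nonneg] at hnonneg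
  have hsum := nonpos_of_mul_nonpos_right hnonneg (div_pos Real.pi_pos hp₀)
  exact mod_cast hsum

lemma natCast_val_two_mul {R : Type*} [Ring R] {N : ℕ} [NeZero N] (a : ZMod N) :
    ((2 * a).val : R) = 2 * a.val - N + if 2 * a.val < N then (N : R) else 0 := by
  have hmod : (2 * a).val = 2 * a.val % N := by
    rw [← ZMod.val_natCast, Nat.cast_mul, ZMod.natCast_zmod_val, Nat.cast_ofNat]
  split_ifs with h
  · rw [hmod, Nat.mod_eq_of_lt h, Nat.cast_mul, Nat.cast_ofNat, sub_add_cancel]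
  · have hlt := ZMod.val_lt a
    rw [hmod, Nat.mod_eq_sub_mod (not_lt.1 h), Nat.mod_eq_of_lt (by lia), Nat.cast_sub (not_lt.1 h),
      Nat.cast_mul, Nat.cast_ofNat, add_zero]

lemma sum_filter_two_mul_val_lt {M : Type*} [AddCommMonoid M] (N : ℕ) [NeZero N] (f : ZMod N → M) :
    ∑ a with 2 * a.val < N, f a = ∑ y ∈ Finset.range ((N + 1) / 2), f y := by
  symm
  refine Finset.sum_nbij' (fun y ↦ y) ZMod.val (fun y hy ↦ ?_) (fun a ha ↦ ?_) (fun y hy ↦ ?_)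
    (by simp) (by simp)
  · have hy' := Finset.mem_range.1 hy
    rw [Finset.mem_filter_univ, ZMod.val_cast_of_lt (by lia)]
    lia
  · have ha' := (Finset.mem_filter.1 ha).2
    rw [Finset.mem_range]
    lia
  · have hy' := Finset.mem_range.1 hy
    exact ZMod.val_cast_of_lt (by lia)

theorem sum_mulChar_mul_val_eq {R : Type*} [CommRing R] [IsDomain R] {N : ℕ} [NeZero N]
    (hN : Odd N) {χ : MulChar (ZMod N) R} (hχ : χ ≠ 1) :
    ∑ a, χ a * a.val =
      χ 2 * (2 * ∑ a, χ a * a.val + N * ∑ y ∈ Finset.range ((N + 1) / 2), χ y) := by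
  have htwo : IsUnit (2 : ZMod N) := by
    exact_mod_cast (ZMod.isUnit_iff_coprime 2 N).2 (Nat.coprime_two_left.2 hN)
  have hterm (a : ZMod N) : χ a * ((2 * a).val : R) =
      2 * (χ a * a.val) - N * χ a + N * if 2 * a.val < N then χ a else 0 := by
    rw [natCast_val_two_mul]
    split_ifs <;> ring
  calc ∑ a, χ a * a.val
      = ∑ a, χ (2 * a) * ((2 * a).val : R) :=
        (Equiv.sum_comp htwo.unit.mulLeft fun a ↦ χ a * (a.val : R)).symm
    _ = χ 2 * ∑ a, χ a * ((2 * a).val : R) := by simp only [map_mul, mul_assoc, Finset.mul_sum]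
    _ = χ 2 * (2 * ∑ a, χ a * a.val + N * ∑ y ∈ Finset.range ((N + 1) / 2), χ y) := by
      rw [Finset.sum_congr rfl fun a _ ↦ hterm a, Finset.sum_add_distrib, Finset.sum_sub_distrib,
        ← Finset.mul_sum, ← Finset.mul_sum, ← Finset.mul_sum, χ.sum_eq_zero_of_ne_one hχ, mul_zero,
        sub_zero, ← Finset.sum_filter, sum_filter_two_mul_val_lt]

theorem sum_Icc_quadraticChar_nonneg {p : ℕ} [Fact p.Prime] (hp : p % 4 = 3) :
    0 ≤ ∑ y ∈ Finset.Icc 1 ((p - 1) / 2), quadraticChar (ZMod p) y := by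
  have hchar : ringChar (ZMod p) ≠ 2 := by rw [ZMod.ringChar_zmod_n]; lia
  have hp₀ : (0 : ℤ) < p := Nat.cast_pos.2 (Nat.Prime.pos Fact.out)
  have htwo := quadraticChar_dichotomy (Ring.two_ne_zero hchar)
  have hT := sum_quadraticChar_mul_val_nonpos hp
  have hdouble := sum_mulChar_mul_val_eq (Nat.odd_iff.2 (by lia)) (quadraticChar_ne_one hchar)
  have hrange : ∑ y ∈ Finset.range ((p + 1) / 2), quadraticChar (ZMod p) y =
      ∑ y ∈ Finset.Icc 1 ((p - 1) / 2), quadraticChar (ZMod p) y := by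
    rw [Finset.range_eq_Ico, Finset.sum_eq_sum_Ico_succ_bot (by lia), Nat.cast_zero,
      MulChar.map_zero, zero_add, ← Finset.Ico_add_one_right_eq_Icc]
    congr 2
    lia
  rw [hrange] at hdouble
  refine nonneg_of_mul_nonneg_right (a := (p : ℤ)) ?_ hp₀
  rcases htwo with h | h <;> rw [h] at hdouble <;> linarith

lemma sum_quadraticChar_add_card {ι F : Type*} [Field F] [Fintype F] [DecidableEq F]
    {s : Finset ι} {f : ι → F} (hf : ∀ i ∈ s, f i ≠ 0) [DecidablePred fun i ↦ IsSquare (f i)] :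
    ∑ i ∈ s, quadraticChar F (f i) + s.card = 2 * ({i ∈ s | IsSquare (f i)}.card : ℤ) := by
  have hterm (i : ι) (hi : i ∈ s) :
      quadraticChar F (f i) + 1 = 2 * if IsSquare (f i) then 1 else 0 := by
    split_ifs with h
    · rw [(quadraticChar_one_iff_isSquare (hf i hi)).2 h, mul_one, one_add_one_eq_two]
    · rw [quadraticChar_neg_one_iff_not_isSquare.2 h, mul_zero, neg_add_cancel]
  rw [Finset.card_eq_sum_ones, Nat.cast_sum, Nat.cast_one, ← Finset.sum_add_distrib,
    Finset.sum_congr rfl hterm, ← Finset.mul_sum, Finset.sum_boole]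

lemma exists_sq_modEq_iff_isSquare {n : ℕ} {a : ℤ} :
    (∃ x : ℤ, x ^ 2 ≡ a [ZMOD n]) ↔ IsSquare (a : ZMod n) := by
  simp only [← ZMod.intCast_eq_intCast_iff, isSquare_iff_exists_sq, Int.cast_pow, eq_comm,
    (ZMod.intCast_surjective (n := n)).exists]

end

open scoped Classical in
/-- For a prime `p ≡ 3 (mod 4)`, the number of quadratic residues of `p`
in `[1, (p-1)/2]` exceeds `p/4`, i.e. `4 * R_b(p) > p`. -/
theorem four_mul_small_residues_card_gt_of_prime_mod_four_eq_three
    (p : ℕ) (hp : p.Prime) (hmod : p % 4 = 3) :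
    4 * ((Finset.Icc 1 ((p - 1) / 2)).filter
        (fun y => ∃ x : ℤ, x ^ 2 ≡ (y : ℤ) [ZMOD (p : ℤ)])).card > p := by
  have : Fact p.Prime := ⟨hp⟩
  have hne_zero (y : ℕ) (hy : y ∈ Finset.Icc 1 ((p - 1) / 2)) : (y : ZMod p) ≠ 0 := by
    obtain ⟨hpos, hle⟩ := Finset.mem_Icc.1 hy
    exact mt (ZMod.natCast_eq_zero_iff y p).1 (Nat.not_dvd_of_pos_of_lt hpos (by lia))
  have hsum := sum_Icc_quadraticChar_nonneg hmod
  have hcount := sum_quadraticChar_add_card hne_zero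
  rw [Nat.card_Icc] at hcount
  have hlt : p < 4 * ((Finset.Icc 1 ((p - 1) / 2)).filter
      fun y : ℕ ↦ IsSquare (y : ZMod p)).card := by lia
  /- The filter in the statement elaborates over `ℤ`: the interval of naturals is coerced to a
  `Finset ℤ` through the `Finset` monad. -/
  refine hlt.trans_le (Nat.mul_le_mul_left 4 (Finset.card_le_card_of_injOn ((↑) : ℕ → ℤ)
    (fun y hy ↦ ?_) Nat.cast_injective.injOn))
  obtain ⟨hy_mem, hy_sq⟩ := Finset.mem_filter.1 hy
  refine Finset.mem_filter.2 ⟨?_, exists_sq_modEq_iff_isSquare.2 (mod_cast hy_sq)⟩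
  simpa using Finset.mem_Icc.1 hy_mem
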